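/- (Averaged two-copy Choi state for unistochastic channels.) Let d ≥ 2 and consider the unitary group U(Fin d × Fin d) with its Haar probability measure (environment dimension equal to d, initialized in the maximally mixed state). Then for all a₁, a₂, b₁, b₂, i₁, i₂, j₁, j₂ ∈ Fin d, (1/d⁴) Σ_{l₁, l₂, o₁, o₂ ∈ Fin d} ∫_{U(Fin d × Fin d)} U_{(i₁,l₁),(a₁,o₁)} U_{(i₂,l₂),(a₂,o₂)} conj(U_{(j₁,l₁),(b₁,o₁)}) conj(U_{(j₂,l₂),(b₂,o₂)}) dHaar(U) = (1/(d⁴ − 1)) · [ δ_{a₁b₁}δ_{a₂b₂}δ_{i₁j₁}δ_{i₂j₂} + (1/d²) δ_{a₁b₂}δ_{a₂b₁}δ_{i₁j₂}δ_{i₂j₁} − (1/d³)( δ_{a₁b₂}δ_{a₂b₁}δ_{i₁j₁}δ_{i₂j₂} + δ_{a₁b₁}δ_{a₂b₂}δ_{i₁j₂}δ_{i₂j₁} ) ]. -/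

import Mathlib

open MeasureTheory Matrix

noncomputable instance Matrix.measurableSpace {m n R : Type*} [MeasurableSpace R] :
    MeasurableSpace (Matrix m n R) := inferInstanceAs (MeasurableSpace (m → n → R))

instance Matrix.borelSpace {m n R : Type*} [Countable m] [Countable n]
    [TopologicalSpace R] [MeasurableSpace R] [BorelSpace R] [SecondCountableTopology R] :
    BorelSpace (Matrix m n R) := inferInstanceAs (BorelSpace (m → n → R))

instance {ι : Type*} [Fintype ι] [DecidableEq ι] :
    BorelSpace (Matrix.unitaryGroup ι ℂ) := Subtype.borelSpace _

/-- Kronecker delta with values in `ℂ`. -/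
noncomputable def δ {α : Type*} [DecidableEq α] (x y : α) : ℂ := if x = y then 1 else 0


section aux
variable {n : Type*} [Fintype n] [DecidableEq n]

def InvT (T : n → n → n → n → ℂ) : Prop :=
  ∀ V ∈ Matrix.unitaryGroup n ℂ, ∀ I1 I2 J1 J2, T I1 I2 J1 J2 =
    ∑ K1, ∑ K2, ∑ L1, ∑ L2, V I1 K1 * V I2 K2 * (starRingEnd ℂ) (V J1 L1) *
      (starRingEnd ℂ) (V J2 L2) * T K1 K2 L1 L2

lemma InvT.diag {T : n → n → n → n → ℂ} (h : InvT T) (z : n → ℂ)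
    (hz : ∀ k, z k * (starRingEnd ℂ) (z k) = 1) (I1 I2 J1 J2 : n) :
    T I1 I2 J1 J2 = z I1 * z I2 * (starRingEnd ℂ) (z J1) * (starRingEnd ℂ) (z J2)
      * T I1 I2 J1 J2 := by
  have hV : Matrix.diagonal z ∈ Matrix.unitaryGroup n ℂ := by
    rw [Matrix.mem_unitaryGroup_iff, Matrix.star_eq_conjTranspose, Matrix.diagonal_conjTranspose,
      Matrix.diagonal_mul_diagonal, ← Matrix.diagonal_one]
    congr 1
    funext k
    exact hz k
  have := h _ hV I1 I2 J1 J2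
  simpa [Matrix.diagonal_apply, apply_ite (starRingEnd ℂ), ite_mul, mul_ite] using this

lemma InvT.zero {T : n → n → n → n → ℂ} (h : InvT T) (I1 I2 J1 J2 : n)
    (h1 : ¬ (I1 = J1 ∧ I2 = J2)) (h2 : ¬ (I1 = J2 ∧ I2 = J1)) : T I1 I2 J1 J2 = 0 := by
  have key : ∀ k, T I1 I2 J1 J2 = _ := fun k => h.diag (fun x => if x = k then Complex.I else 1)
    (by intro x; by_cases hx : x = k <;> simp [hx]) I1 I2 J1 J2
  have e : ∀ x : ℂ, x = -x → x = 0 := fun x hx => by linear_combination hx / 2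
  have e1 : ∀ x : ℂ, x = Complex.I * x → x = 0 := fun x hx => by
    have : x = Complex.I * (Complex.I * x) := by rw [← hx]; exact hx
    rw [← mul_assoc, Complex.I_mul_I] at this
    exact e x (by simpa using this)
  have k1 := key I1
  have k2 := key I2
  by_cases b : I1 = J1
  · subst b
    have h2' : I2 ≠ J2 := fun h => h1 ⟨rfl, h⟩
    by_cases a : I2 = I1
    · subst a
      simp [h2'.symm] at k1
      exact e1 _ k1
    · simp [a, h2'.symm, Ne.symm a] at k2
      exact e1 _ k2
  by_cases c : I1 = J2
  · subst c
    have h2' : I2 ≠ J1 := fun h => h2 ⟨rfl, h⟩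
    by_cases a : I2 = I1
    · subst a
      simp [h2'.symm] at k1
      exact e1 _ k1
    · simp [a, h2'.symm, Ne.symm a] at k2
      exact e1 _ k2
  by_cases a : I2 = I1
  · subst a
    simp [Ne.symm b, Ne.symm c] at k1
    exact e _ k1
  · simp [a, Ne.symm b, Ne.symm c] at k1
    exact e1 _ k1

lemma InvT.perm {T : n → n → n → n → ℂ} (h : InvT T) (σ : Equiv.Perm n) (I1 I2 J1 J2 : n) :
    T I1 I2 J1 J2 = T (σ I1) (σ I2) (σ J1) (σ J2) := by
  have hV : (Matrix.of fun i j => if σ i = j then (1:ℂ) else 0) ∈ Matrix.unitaryGroup n ℂ := by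
    rw [Matrix.mem_unitaryGroup_iff]
    ext i j
    simp [Matrix.mul_apply, Matrix.one_apply, Matrix.star_apply, apply_ite, eq_comm]
  have := h _ hV I1 I2 J1 J2
  simpa [apply_ite (starRingEnd ℂ), ite_mul, mul_ite] using this

lemma InvT.had {T : n → n → n → n → ℂ} (h : InvT T) (p q : n) (hpq : p ≠ q) :
    T p p p p = T p q p q + T p q q p := by
  have n2 : (starRingEnd ℂ) 2 = 2 := Complex.conj_ofNat 2
  have n3 : (starRingEnd ℂ) 3 = 3 := Complex.conj_ofNat 3
  have n4 : (starRingEnd ℂ) 4 = 4 := Complex.conj_ofNat 4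
  have n5 : (starRingEnd ℂ) 5 = 5 := Complex.conj_ofNat 5
  let v : n → ℂ := fun k => (if k = p then 1 else 0) - 2 * (if k = q then 1 else 0)
  have hvv : ∑ k, v k * v k = 5 := by
    simp [v, sub_mul, mul_sub, Finset.sum_add_distrib, hpq, hpq.symm]
    norm_num
  have hV : (Matrix.of fun i j => (if i = j then (1:ℂ) else 0) - 2/5 * v i * v j)
      ∈ Matrix.unitaryGroup n ℂ := by
    rw [Matrix.mem_unitaryGroup_iff]
    ext i j
    have hc : ∀ k, (starRingEnd ℂ) (v k) = v k := by
      intro k; simp [v, apply_ite (starRingEnd ℂ), n2]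
    have : ∀ k, (2/5 * v i * v k) * (2/5 * v j * v k) = (4/25 * v i * v j) * (v k * v k) := by
      intro k; ring
    simp [Matrix.mul_apply, Matrix.one_apply, Matrix.star_apply, apply_ite, hc,
      sub_mul, mul_sub]
    simp only [this, ← Finset.mul_sum, hvv]
    by_cases hij : i = j
    · subst hij; simp; ring
    · simp [hij, Ne.symm hij]; ring
  have hrow : ∀ k, (if p = k then (1:ℂ) else 0) - 2/5 * v p * v k =
      (if k = p then 3/5 else 0) + (if k = q then 4/5 else 0) := by
    intro k
    by_cases h1 : k = p
    · subst h1; simp [v, hpq]; norm_num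
    · by_cases h2 : k = q
      · subst h2; simp [v, hpq, h1]; norm_num
      · simp [v, h1, h2, Ne.symm h1]
  have := h _ hV p p p p
  simp only [Matrix.of_apply, hrow] at this
  simp [n3, n4, n5, apply_ite (starRingEnd ℂ), add_mul, mul_add, Finset.sum_add_distrib, ite_mul, mul_ite] at this
  have z : ∀ I1 I2 J1 J2, _ → _ → T I1 I2 J1 J2 = 0 := h.zero
  have s : ∀ I1 I2 J1 J2, T I1 I2 J1 J2 = _ := h.perm (Equiv.swap p q)
  have s1 := s q q q q
  have s2 := s q p q p
  have s3 := s q p p q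
  simp at s1 s2 s3
  rw [s1, s2, s3, z p p p q, z p p q p, z p q p p, z q p p p, z q q q p, z q q p q, z q p q q,
    z p q q q, z p p q q, z q q p p] at this <;> try simp [hpq, hpq.symm]
  linear_combination 625/288 * this

lemma exists_perm2 {i j p q : n} (hij : i ≠ j) (hpq : p ≠ q) :
    ∃ σ : Equiv.Perm n, σ i = p ∧ σ j = q := by
  refine ⟨(Equiv.swap i p).trans (Equiv.swap (Equiv.swap i p j) q), ?_, ?_⟩
  · simp only [Equiv.trans_apply, Equiv.swap_apply_left]
    apply Equiv.swap_apply_of_ne_of_ne _ hpq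
    intro h
    have : Equiv.swap i p i = Equiv.swap i p j := by rw [← h]; simp
    exact hij ((Equiv.swap i p).injective this)
  · simp

lemma InvT.form {T : n → n → n → n → ℂ} (h : InvT T) (p q : n) (hpq : p ≠ q) :
    ∃ α β : ℂ, ∀ I1 I2 J1 J2, T I1 I2 J1 J2 =
      α * (δ I1 J1 * δ I2 J2) + β * (δ I1 J2 * δ I2 J1) := by
  refine ⟨T p q p q, T p q q p, fun I1 I2 J1 J2 => ?_⟩
  by_cases h1 : I1 = J1 ∧ I2 = J2
  · obtain ⟨rfl, rfl⟩ := h1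
    by_cases h3 : I1 = I2
    · subst h3
      have := h.perm (Equiv.swap I1 p) I1 I1 I1 I1
      simp at this
      simp [δ, this, h.had p q hpq]
    · obtain ⟨σ, hp, hq⟩ := exists_perm2 h3 hpq
      rw [h.perm σ, hp, hq]
      simp [δ, h3]
  by_cases h2 : I1 = J2 ∧ I2 = J1
  · obtain ⟨rfl, rfl⟩ := h2
    have h3 : I1 ≠ I2 := by rintro rfl; simp at h1
    obtain ⟨σ, hp, hq⟩ := exists_perm2 h3 hpq
    rw [h.perm σ, hp, hq]
    simp [δ, h3]
  · rw [h.zero _ _ _ _ h1 h2]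
    have e1 : δ I1 J1 * δ I2 J2 = 0 := by
      simp only [δ]; by_cases a : I1 = J1 <;> simp_all
    have e2 : δ I1 J2 * δ I2 J1 = 0 := by
      simp only [δ]; by_cases a : I1 = J2 <;> simp_all
    simp [e1, e2]

variable (μ : Measure (Matrix.unitaryGroup n ℂ)) [μ.IsHaarMeasure] [IsProbabilityMeasure μ]

lemma integrable_four (I1 I2 J1 J2 A1 A2 B1 B2 : n) :
    Integrable (fun U : Matrix.unitaryGroup n ℂ => U I1 A1 * U I2 A2 * (starRingEnd ℂ) (U J1 B1) *
      (starRingEnd ℂ) (U J2 B2)) μ := by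
  have hc : ∀ i j, Continuous (fun U : Matrix.unitaryGroup n ℂ => U i j) := fun i j =>
    (continuous_subtype_val).matrix_elem i j
  refine Integrable.of_bound (C := 1) ?_ ?_
  · apply Continuous.aestronglyMeasurable
    exact (((hc _ _).mul (hc _ _)).mul (Complex.continuous_conj.comp (hc _ _))).mul
      (Complex.continuous_conj.comp (hc _ _))
  · refine Filter.Eventually.of_forall fun U => ?_
    have hb : ∀ i j, ‖U i j‖ ≤ 1 := fun i j => entry_norm_bound_of_unitary U.2 i j
    simp only [norm_mul, RCLike.norm_conj]
    exact mul_le_one₀ (mul_le_one₀ (mul_le_one₀ (hb _ _) (norm_nonneg _) (hb _ _))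
      (norm_nonneg _) (hb _ _)) (norm_nonneg _) (hb _ _)

lemma invT_haar (A1 A2 B1 B2 : n) :
    InvT (fun I1 I2 J1 J2 => ∫ U : Matrix.unitaryGroup n ℂ, U I1 A1 * U I2 A2 *
      (starRingEnd ℂ) (U J1 B1) * (starRingEnd ℂ) (U J2 B2) ∂μ) := by
  intro V hV I1 I2 J1 J2
  have hi := integrable_four μ
  dsimp only
  rw [← integral_mul_left_eq_self _ (⟨V, hV⟩ : Matrix.unitaryGroup n ℂ)]
  have hexp : ∀ U : Matrix.unitaryGroup n ℂ,
      ((⟨V, hV⟩ * U : Matrix.unitaryGroup n ℂ) I1 A1) * ((⟨V, hV⟩ * U : Matrix.unitaryGroup n ℂ) I2 A2)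
      * (starRingEnd ℂ) ((⟨V, hV⟩ * U : Matrix.unitaryGroup n ℂ) J1 B1)
      * (starRingEnd ℂ) ((⟨V, hV⟩ * U : Matrix.unitaryGroup n ℂ) J2 B2) =
      ∑ K1, ∑ K2, ∑ L1, ∑ L2, V I1 K1 * V I2 K2 * (starRingEnd ℂ) (V J1 L1) *
      (starRingEnd ℂ) (V J2 L2) * (U K1 A1 * U K2 A2 *
      (starRingEnd ℂ) (U L1 B1) * (starRingEnd ℂ) (U L2 B2)) := by
    intro U
    have hm : ∀ i j, (⟨V, hV⟩ * U : Matrix.unitaryGroup n ℂ) i j = ∑ k, V i k * U k j :=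
      fun i j => Matrix.mul_apply
    rw [hm, hm, hm, hm, map_sum, map_sum, Finset.sum_mul_sum, Finset.sum_mul, Finset.sum_mul]
    refine Finset.sum_congr rfl fun K1 _ => ?_
    rw [Finset.sum_mul, Finset.sum_mul]
    refine Finset.sum_congr rfl fun K2 _ => ?_
    rw [mul_assoc _ (∑ _, _) (∑ _, _), Finset.sum_mul_sum, Finset.mul_sum]
    refine Finset.sum_congr rfl fun L1 _ => ?_
    rw [Finset.mul_sum]
    refine Finset.sum_congr rfl fun L2 _ => ?_
    rw [map_mul, map_mul]
    ring
  refine (integral_congr_ae (Filter.Eventually.of_forall hexp)).trans ?_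
  rw [integral_finsetSum _ fun K1 _ => integrable_finsetSum _ fun K2 _ =>
    integrable_finsetSum _ fun L1 _ => integrable_finsetSum _ fun L2 _ =>
      (hi K1 K2 L1 L2 A1 A2 B1 B2).const_mul _]
  refine Finset.sum_congr rfl fun K1 _ => ?_
  rw [integral_finsetSum _ fun K2 _ =>
    integrable_finsetSum _ fun L1 _ => integrable_finsetSum _ fun L2 _ =>
      (hi K1 K2 L1 L2 A1 A2 B1 B2).const_mul _]
  refine Finset.sum_congr rfl fun K2 _ => ?_
  rw [integral_finsetSum _ fun L1 _ => integrable_finsetSum _ fun L2 _ =>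
      (hi K1 K2 L1 L2 A1 A2 B1 B2).const_mul _]
  refine Finset.sum_congr rfl fun L1 _ => ?_
  rw [integral_finsetSum _ fun L2 _ => (hi K1 K2 L1 L2 A1 A2 B1 B2).const_mul _]
  refine Finset.sum_congr rfl fun L2 _ => ?_
  exact integral_const_mul _ _

lemma weingarten (p q : n) (hpq : p ≠ q) (N : ℂ) (hN : N = Fintype.card n)
    (I1 I2 J1 J2 A1 A2 B1 B2 : n) :
    N * (N^2-1) * ∫ U : Matrix.unitaryGroup n ℂ, U I1 A1 * U I2 A2 * (starRingEnd ℂ) (U J1 B1) *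
      (starRingEnd ℂ) (U J2 B2) ∂μ =
     (N * (δ A1 B1 * δ A2 B2) - δ A1 B2 * δ A2 B1) * (δ I1 J1 * δ I2 J2) +
     (N * (δ A1 B2 * δ A2 B1) - δ A1 B1 * δ A2 B2) * (δ I1 J2 * δ I2 J1) := by
  obtain ⟨α, β, h⟩ := (invT_haar μ A1 A2 B1 B2).form p q hpq
  have hi := integrable_four μ
  have hu : ∀ (U : Matrix.unitaryGroup n ℂ) A B, ∑ k, U k A * (starRingEnd ℂ) (U k B) = δ A B := by
    intro U A B
    have := congrFun₂ (Matrix.mem_unitaryGroup_iff'.1 U.2) B A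
    rw [Matrix.mul_apply, Matrix.one_apply] at this
    simp only [δ, eq_comm (a := A), ← this]
    exact Finset.sum_congr rfl fun k _ => mul_comm _ _
  have c1 : ∑ I1, ∑ I2, ∫ U : Matrix.unitaryGroup n ℂ, U I1 A1 * U I2 A2 *
      (starRingEnd ℂ) (U I1 B1) * (starRingEnd ℂ) (U I2 B2) ∂μ = δ A1 B1 * δ A2 B2 := by
    simp only [← integral_finsetSum _ fun K2 _ => (hi _ _ _ _ _ _ _ _)]
    rw [← integral_finsetSum _ fun K1 _ => integrable_finsetSum _ fun K2 _ => (hi _ _ _ _ _ _ _ _)]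
    have : ∀ U : Matrix.unitaryGroup n ℂ, ∑ I1, ∑ I2, U I1 A1 * U I2 A2 *
      (starRingEnd ℂ) (U I1 B1) * (starRingEnd ℂ) (U I2 B2) = δ A1 B1 * δ A2 B2 := by
      intro U
      rw [← hu U, ← hu U, Finset.sum_mul_sum]
      exact Finset.sum_congr rfl fun k _ => Finset.sum_congr rfl fun l _ => by ring
    simp [this]
  have c2 : ∑ I1, ∑ I2, ∫ U : Matrix.unitaryGroup n ℂ, U I1 A1 * U I2 A2 *
      (starRingEnd ℂ) (U I2 B1) * (starRingEnd ℂ) (U I1 B2) ∂μ = δ A1 B2 * δ A2 B1 := by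
    simp only [← integral_finsetSum _ fun K2 _ => (hi _ _ _ _ _ _ _ _)]
    rw [← integral_finsetSum _ fun K1 _ => integrable_finsetSum _ fun K2 _ => (hi _ _ _ _ _ _ _ _)]
    have : ∀ U : Matrix.unitaryGroup n ℂ, ∑ I1, ∑ I2, U I1 A1 * U I2 A2 *
      (starRingEnd ℂ) (U I2 B1) * (starRingEnd ℂ) (U I1 B2) = δ A1 B2 * δ A2 B1 := by
      intro U
      rw [← hu U, ← hu U, Finset.sum_mul_sum]
      exact Finset.sum_congr rfl fun k _ => Finset.sum_congr rfl fun l _ => by ring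
    simp [this]
  simp only [h] at c1 c2
  have d1 : α * N^2 + β * N = δ A1 B1 * δ A2 B2 := by
    rw [← c1, hN]
    simp [δ, Finset.sum_add_distrib]
    ring
  have d2 : α * N + β * N^2 = δ A1 B2 * δ A2 B1 := by
    rw [← c2, hN]
    simp [δ, Finset.sum_add_distrib]
    ring
  rw [h, ← d1, ← d2]
  ring

end aux

/-- Entries of the Haar-averaged two-copy Choi–Jamiołkowski state of a
unistochastic channel (environment of dimension `d`, initialised maximally mixed). -/
theorem averaged_unistochastic_choi_t_two (d : ℕ) (hd : 2 ≤ d)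
    (μ : Measure (Matrix.unitaryGroup (Fin d × Fin d) ℂ)) [μ.IsHaarMeasure]
    [IsProbabilityMeasure μ] (a₁ a₂ b₁ b₂ i₁ i₂ j₁ j₂ : Fin d) :
    (1 / (d : ℂ) ^ 4) * ∑ l₁ : Fin d, ∑ l₂ : Fin d, ∑ o₁ : Fin d, ∑ o₂ : Fin d,
        ∫ U : Matrix.unitaryGroup (Fin d × Fin d) ℂ,
          U (i₁, l₁) (a₁, o₁) * U (i₂, l₂) (a₂, o₂) *
            (starRingEnd ℂ) (U (j₁, l₁) (b₁, o₁)) *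
            (starRingEnd ℂ) (U (j₂, l₂) (b₂, o₂)) ∂μ =
      (1 / ((d : ℂ) ^ 4 - 1)) *
        (δ a₁ b₁ * δ a₂ b₂ * δ i₁ j₁ * δ i₂ j₂ +
          (1 / (d : ℂ) ^ 2) * (δ a₁ b₂ * δ a₂ b₁ * δ i₁ j₂ * δ i₂ j₁) -
          (1 / (d : ℂ) ^ 3) *
            (δ a₁ b₂ * δ a₂ b₁ * δ i₁ j₁ * δ i₂ j₂ +
              δ a₁ b₁ * δ a₂ b₂ * δ i₁ j₂ * δ i₂ j₁)) := by
  have hw := fun I1 I2 J1 J2 A1 A2 B1 B2 => weingarten μ (n := Fin d × Fin d)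
    (⟨0, by omega⟩, ⟨0, by omega⟩) (⟨1, by omega⟩, ⟨0, by omega⟩) (by simp) ((d : ℂ) ^ 2)
    (by simp [sq]) I1 I2 J1 J2 A1 A2 B1 B2
  have hd0 : (d : ℂ) ≠ 0 := by
    have : d ≠ 0 := by omega
    exact_mod_cast this
  have hd1 : (d : ℂ) ^ 4 - 1 ≠ 0 := by
    have : d ^ 4 ≠ 1 := by
      have := Nat.pow_le_pow_left hd 4
      omega
    rw [sub_ne_zero]
    exact_mod_cast this
  have hp : ∀ x y z w : Fin d, δ (x, y) (z, w) = δ x z * δ y w := by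
    intro x y z w
    simp only [δ, Prod.mk.injEq]
    by_cases h1 : x = z <;> by_cases h2 : y = w <;> simp [h1, h2]
  have hr : ∀ x : Fin d, δ x x = 1 := by simp [δ]
  have hs1 : ∑ x : Fin d, ∑ y : Fin d, δ x y * δ y x = d := by
    simp [δ]
  have hw2 : ∀ I1 I2 J1 J2 A1 A2 B1 B2, _ = _ := fun I1 I2 J1 J2 A1 A2 B1 B2 =>
    eq_div_of_mul_eq (c := (d : ℂ) ^ 2 * (((d : ℂ) ^ 2) ^ 2 - 1))
      (mul_ne_zero (pow_ne_zero 2 hd0) (by rw [← pow_mul]; exact hd1))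
      ((mul_comm _ _).trans (hw I1 I2 J1 J2 A1 A2 B1 B2))
  simp only [hw2, hp, hr, mul_one]
  have hexp : ∀ l₁ l₂ o₁ o₂ : Fin d,
      (((d : ℂ) ^ 2 * (δ a₁ b₁ * (δ a₂ b₂)) - δ a₁ b₂ * δ o₁ o₂ * (δ a₂ b₁ * δ o₂ o₁)) *
        (δ i₁ j₁ * δ i₂ j₂) +
       ((d : ℂ) ^ 2 * (δ a₁ b₂ * δ o₁ o₂ * (δ a₂ b₁ * δ o₂ o₁)) - δ a₁ b₁ * δ a₂ b₂) *
        (δ i₁ j₂ * δ l₁ l₂ * (δ i₂ j₁ * δ l₂ l₁))) =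
      (d : ℂ) ^ 2 * (δ a₁ b₁ * δ a₂ b₂ * δ i₁ j₁ * δ i₂ j₂)
      - (δ a₁ b₂ * δ a₂ b₁ * δ i₁ j₁ * δ i₂ j₂) * (δ o₁ o₂ * δ o₂ o₁)
      + (d : ℂ) ^ 2 * (δ a₁ b₂ * δ a₂ b₁ * δ i₁ j₂ * δ i₂ j₁) * (δ l₁ l₂ * δ l₂ l₁) *
        (δ o₁ o₂ * δ o₂ o₁)
      - (δ a₁ b₁ * δ a₂ b₂ * δ i₁ j₂ * δ i₂ j₁) * (δ l₁ l₂ * δ l₂ l₁) := by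
    intros; ring
  simp only [hexp, ← Finset.sum_div, Finset.sum_add_distrib, Finset.sum_sub_distrib,
    ← Finset.mul_sum, ← Finset.sum_mul, hs1, Finset.sum_const, Finset.card_univ,
    Fintype.card_fin, nsmul_eq_mul]
  have hd2 : ((d : ℂ) ^ 2) ^ 2 - 1 ≠ 0 := by rw [← pow_mul]; exact hd1
  have hs3 : ∑ x : Fin d, ∑ y : Fin d, (d : ℂ) ^ 2 * δ x y * δ y x = (d : ℂ) ^ 3 := by
    simp only [mul_assoc, ← Finset.mul_sum, hs1]
    ring
  field_simp
  ring_nf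
  rw [hs3]
  ring
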